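/- For every odd natural number n with n ≥ 3, the function ν_n is a polynomial of degree exactly n: the coefficient c_{2k−1}(n) vanishes whenever 2k−1 > n, the coefficient c_n(n) is nonzero, and hence there exists a polynomial p ∈ ℂ[X] of degree n with ν_n(z) = p(z) for all z ∈ ℂ. -/

import Mathlib

/-- Even coefficients c_{2k}(n) of the generalized power series. -/
noncomputable def ceven (n k : ℕ) : ℂ :=
  if k = 0 then 1
  else if k = 1 then -(n : ℂ)
  else (-1) ^ k * 2 ^ k * (n : ℂ) * ((n : ℂ) - ((2 * (k : ℂ) - 1) ^ 2 + 1)) *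
    (∏ j ∈ Finset.Icc 1 (k - 2), ((n : ℂ) - 2 * (1 + (j : ℂ)))) /
      (Nat.factorial (2 * k) : ℂ)

/-- Odd coefficients: `codd n k` is c_{2k-1}(n), for k ≥ 1. -/
noncomputable def codd (n k : ℕ) : ℂ :=
  if k ≤ 1 then 1
  else (-1) ^ (k + 1) * 2 ^ (k - 1) * ((n : ℂ) - ((2 * ((k : ℂ) - 1)) ^ 2 + 1)) *
    (∏ j ∈ Finset.Icc 1 (k - 2), ((n : ℂ) - (2 * (1 + (j : ℂ)) - 1))) /
      (Nat.factorial (2 * k - 1) : ℂ)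

/-- μₙ(z) = Σ_{k≥0} c_{2k}(n)·z^{2k}. -/
noncomputable def muF (n : ℕ) (z : ℂ) : ℂ := ∑' k : ℕ, ceven n k * z ^ (2 * k)

/-- νₙ(z) = Σ_{k≥1} c_{2k-1}(n)·z^{2k-1}. -/
noncomputable def nuF (n : ℕ) (z : ℂ) : ℂ := ∑' k : ℕ, codd n (k + 1) * z ^ (2 * k + 1)

/-- βₙ = μₙ + νₙ. -/
noncomputable def betaF (n : ℕ) (z : ℂ) : ℂ := muF n z + nuF n z

/-!
For `k ≥ 2`, the numerator of `c_{2k-1}(n)` is a nonzero constant times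
`(n - (4(k-1)² + 1)) (n - 3) (n - 5) ⋯ (n - (2k - 3))`. When `n = 2m + 1 ≥ 3`, the factor `n - n`
occurs exactly when `k ≥ m + 2`, so the series stops at `k = m + 1`; there the quadratic factor is
`2m - 4m² = 2m(1 - 2m) ≠ 0`, and the term has degree `2m + 1 = n`.
-/

open Polynomial

theorem codd_add_two_eq_zero_iff (n k : ℕ) :
    codd n (k + 2) = 0 ↔ n = (2 * (k + 1)) ^ 2 + 1 ∨ ∃ j ∈ Finset.Icc 1 k, n = 2 * j + 1 := by
  have quadratic_factor : (n : ℂ) - ((2 * (((k + 2 : ℕ) : ℂ) - 1)) ^ 2 + 1) = 0 ↔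
      n = (2 * (k + 1)) ^ 2 + 1 := by
    rw [sub_eq_zero, ← Nat.cast_inj (R := ℂ)]
    push_cast
    ring_nf
  have linear_factor (j : ℕ) : (n : ℂ) - (2 * (1 + (j : ℂ)) - 1) = 0 ↔ n = 2 * j + 1 := by
    rw [sub_eq_zero, ← Nat.cast_inj (R := ℂ)]
    push_cast
    ring_nf
  rw [codd, if_neg (by omega), Nat.add_sub_cancel, div_eq_zero_iff, mul_eq_zero, mul_eq_zero,
    quadratic_factor, Finset.prod_eq_zero_iff]
  simp only [linear_factor]
  simp [Nat.factorial_ne_zero]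

theorem codd_two_mul_add_one_eq_zero {m k : ℕ} (hm : 1 ≤ m) (hk : m + 1 < k) :
    codd (2 * m + 1) k = 0 := by
  obtain ⟨i, rfl⟩ := Nat.exists_eq_add_of_le' (show 2 ≤ k by omega)
  exact (codd_add_two_eq_zero_iff _ i).2 (.inr ⟨m, Finset.mem_Icc.2 ⟨hm, by omega⟩, rfl⟩)

theorem codd_two_mul_add_one_succ_ne_zero (m : ℕ) : codd (2 * m + 1) (m + 1) ≠ 0 := by
  rcases m with _ | m
  · simp [codd]
  · rw [Ne, codd_add_two_eq_zero_iff]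
    rintro (h | ⟨j, hj, h⟩)
    · nlinarith
    · have := (Finset.mem_Icc.1 hj).2
      omega

theorem degree_sum_range_succ_C_mul_X_pow {R : Type*} [Semiring R] {a : ℕ → R} {e : ℕ → ℕ}
    (he : StrictMono e) {m : ℕ} (ha : a m ≠ 0) :
    (∑ k ∈ Finset.range (m + 1), C (a k) * X ^ e k).degree = (e m : WithBot ℕ) := by
  have lower_terms : (∑ k ∈ Finset.range m, C (a k) * X ^ e k).degree < (e m : WithBot ℕ) :=
    (degree_sum_le _ _).trans_lt <| (Finset.sup_lt_iff (WithBot.bot_lt_coe _)).2 fun k hk ↦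
      (degree_C_mul_X_pow_le _ _).trans_lt (Nat.cast_lt.2 (he (Finset.mem_range.1 hk)))
  have leading_term : (C (a m) * X ^ e m).degree = (e m : WithBot ℕ) :=
    degree_C_mul_X_pow _ ha
  rw [Finset.sum_range_succ, degree_add_eq_right_of_degree_lt (leading_term ▸ lower_terms),
    leading_term]

theorem tsum_mul_pow_eq_eval_sum_range {R : Type*} [Semiring R] [TopologicalSpace R]
    {a : ℕ → R} {N : ℕ} (ha : ∀ k, N ≤ k → a k = 0) (e : ℕ → ℕ) (z : R) :
    ∑' k, a k * z ^ e k = (∑ k ∈ Finset.range N, C (a k) * X ^ e k).eval z := by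
  rw [tsum_eq_sum (s := Finset.range N) fun k hk ↦ by
    rw [ha k (by simpa using hk), zero_mul]]
  simp [eval_finsetSum]

theorem stmt11 (n : ℕ) (hodd : Odd n) (hn : 3 ≤ n) :
    (∀ k : ℕ, 1 ≤ k → 2 * k - 1 > n → codd n k = 0) ∧
    codd n ((n + 1) / 2) ≠ 0 ∧
    ∃ p : Polynomial ℂ, p.degree = n ∧ ∀ z : ℂ, nuF n z = p.eval z := by
  obtain ⟨m, rfl⟩ := hodd
  have vanish {k : ℕ} (hk : m + 1 < k) : codd (2 * m + 1) k = 0 :=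
    codd_two_mul_add_one_eq_zero (by omega) hk
  have leading : codd (2 * m + 1) (m + 1) ≠ 0 := codd_two_mul_add_one_succ_ne_zero m
  refine ⟨fun k _ hk ↦ vanish (by omega), ?_,
    ∑ k ∈ Finset.range (m + 1), C (codd (2 * m + 1) (k + 1)) * X ^ (2 * k + 1), ?_, fun z ↦ ?_⟩
  · rwa [show (2 * m + 1 + 1) / 2 = m + 1 by omega]
  · exact degree_sum_range_succ_C_mul_X_pow (a := fun k ↦ codd (2 * m + 1) (k + 1))
      (e := fun k ↦ 2 * k + 1) (fun i j hij ↦ by dsimp only; omega) leading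
  · exact tsum_mul_pow_eq_eval_sum_range (fun k hk ↦ vanish (by omega)) _ z
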